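/- Let Q ∈ L²_unif(ℝ), τ ∈ L¹_unif(ℝ), K := 2(‖Q‖_{L²_unif(ℝ)} + ‖τ‖_{L¹_unif(ℝ)}), and for u ∈ H¹(ℝ) define t[u] := ∫_ℝ |u'(x)|² dx − ∫_ℝ Q(x)( conj(u'(x)) u(x) + conj(u(x)) u'(x) ) dx + ∫_ℝ τ(x) |u(x)|² dx. Let u ∈ H¹(ℝ) with ‖u‖_{L²(ℝ)} = 1 and set λ := t[u]. Then λ belongs to the set M_K defined as follows, with λ₀ := −4(2K+1)⁴ and λ₁ := 12(2K+1)⁴: either λ₀ ≤ Re λ ≤ λ₁ and |Im λ| ≤ (2K/(2K+1)) Re λ + 8K(2K+1)³, or Re λ > λ₁ and |Im λ| ≤ (32/12^{3/4}) K (Re λ)^{3/4}. -/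

import Mathlib

open MeasureTheory

/-- The Stepanov `L²_unif` norm: `(sup_t ∫_t^{t+1} |Q|²)^{1/2}`. -/
noncomputable def stepL2 (Q : ℝ → ℂ) : ℝ :=
  Real.sqrt (⨆ t : ℝ, ∫ s in t..(t + 1), ‖Q s‖ ^ 2)

/-- The Stepanov `L¹_unif` norm: `sup_t ∫_t^{t+1} |τ|`. -/
noncomputable def stepL1 (τ : ℝ → ℂ) : ℝ :=
  ⨆ t : ℝ, ∫ s in t..(t + 1), ‖τ s‖

/-- Membership in the Stepanov space `L²_unif(ℝ)`: locally square integrable with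
finite Stepanov norm. -/
def InStepL2 (Q : ℝ → ℂ) : Prop :=
  AEStronglyMeasurable Q volume ∧
  LocallyIntegrable (fun s => ‖Q s‖ ^ 2) volume ∧
  BddAbove (Set.range fun t : ℝ => ∫ s in t..(t + 1), ‖Q s‖ ^ 2)

/-- Membership in the Stepanov space `L¹_unif(ℝ)`: locally integrable with
finite Stepanov norm. -/
def InStepL1 (τ : ℝ → ℂ) : Prop :=
  LocallyIntegrable τ volume ∧
  BddAbove (Set.range fun t : ℝ => ∫ s in t..(t + 1), ‖τ s‖)

/-- `u ∈ H¹(ℝ)` with derivative `u'`: `u` is absolutely continuous with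
`u x = u 0 + ∫_0^x u'`, and both `u` and `u'` are square integrable. -/
def InH1 (u u' : ℝ → ℂ) : Prop :=
  LocallyIntegrable u' volume ∧
  (∀ x : ℝ, u x = u 0 + ∫ s in (0:ℝ)..x, u' s) ∧
  MemLp u 2 volume ∧ MemLp u' 2 volume

/-- The constant `K = 2(‖Q‖_{L²_unif} + ‖τ‖_{L¹_unif})`. -/
noncomputable def Kc (Q τ : ℝ → ℂ) : ℝ := 2 * (stepL2 Q + stepL1 τ)

/-- The sesquilinear form `t[u] = ‖u'‖² - ∫ Q (conj(u')u + conj(u)u') + ∫ τ|u|²`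
associated with the Schrödinger operator with potential `q = Q' + τ`. -/
noncomputable def tform (Q τ u u' : ℝ → ℂ) : ℂ :=
  (Complex.ofReal (∫ x : ℝ, ‖u' x‖ ^ 2))
    - (∫ x : ℝ, Q x * ((starRingEnd ℂ) (u' x) * u x + (starRingEnd ℂ) (u x) * u' x))
    + ∫ x : ℝ, τ x * (‖u x‖ : ℂ) ^ 2

/-!
The weight `w` being `‖τ‖` or `‖Q‖²`, the point is the embedding
`∫ w ‖u‖² ≤ (sup_t ∫_t^{t+1} w) (‖u‖₂² + 2 ‖u‖₂ ‖u'‖₂)`: on a unit interval, averaging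
`‖u x‖² - ‖u y‖² = 2 ∫_y^x Re (conj u · u')` over `y` bounds `‖u x‖²` by the integral of
`‖u‖² + 2 ‖u‖ ‖u'‖` over that interval, and one sums over the intervals `[n, n + 1]`.
Applied to both potential terms, with `v = ‖u'‖₂` and `‖u‖₂ = 1`, it gives
`‖t[u] - v²‖ ≤ K (1 + 2v)^{3/2} / 2`. The region `M_K` follows by elementary inequalities in `v`.
-/

open Set

section AbsoluteContinuity

lemma absolutelyContinuousOnInterval_of_dist_le {X Y : Type*} [PseudoMetricSpace X]
    [PseudoMetricSpace Y] {f : ℝ → X} {g : ℝ → Y} {a b : ℝ}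
    (hg : AbsolutelyContinuousOnInterval g a b)
    (hfg : ∀ x ∈ uIcc a b, ∀ y ∈ uIcc a b, dist (f x) (f y) ≤ dist (g x) (g y)) :
    AbsolutelyContinuousOnInterval f a b := by
  rw [absolutelyContinuousOnInterval_iff] at hg ⊢
  intro ε hε
  obtain ⟨δ, hδ, hgδ⟩ := hg ε hε
  refine ⟨δ, hδ, fun I hI hlen ↦ (Finset.sum_le_sum fun i hi ↦ ?_).trans_lt (hgδ I hI hlen)⟩
  exact hfg _ (hI.1 i hi).1 _ (hI.1 i hi).2

lemma absolutelyContinuousOnInterval_primitive {E : Type*} [NormedAddCommGroup E]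
    [NormedSpace ℝ E] {f : ℝ → E} {a b c : ℝ} (hf : IntervalIntegrable f volume a b)
    (hc : c ∈ uIcc a b) :
    AbsolutelyContinuousOnInterval (fun x ↦ ∫ s in c..x, f s) a b := by
  refine absolutelyContinuousOnInterval_of_dist_le
    (hf.norm.absolutelyContinuousOnInterval_intervalIntegral hc) fun x hx y hy ↦ ?_
  have hcx : IntervalIntegrable f volume c x := hf.mono_set (uIcc_subset_uIcc hc hx)
  have hcy : IntervalIntegrable f volume c y := hf.mono_set (uIcc_subset_uIcc hc hy)
  rw [dist_eq_norm, Real.dist_eq, intervalIntegral.integral_interval_sub_left hcx hcy,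
    intervalIntegral.integral_interval_sub_left hcx.norm hcy.norm]
  exact intervalIntegral.norm_integral_le_abs_integral_norm

variable {E : Type*} [NormedAddCommGroup E] [InnerProductSpace ℝ E] {f f' : ℝ → E} {a b : ℝ}

lemma integral_two_mul_inner_eq_norm_sq_sub (hf : AbsolutelyContinuousOnInterval f a b)
    (hf' : ∀ᵐ x, x ∈ uIcc a b → HasDerivAt f (f' x) x) :
    ∫ x in a..b, 2 * inner ℝ (f x) (f' x) = ‖f b‖ ^ 2 - ‖f a‖ ^ 2 := by
  have hnorm : AbsolutelyContinuousOnInterval (fun x ↦ ‖f x‖) a b :=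
    absolutelyContinuousOnInterval_of_dist_le hf fun x _ y _ ↦
      (dist_norm_norm_le (f x) (f y)).trans_eq (dist_eq_norm (f x) (f y)).symm
  have hsq : AbsolutelyContinuousOnInterval (fun x ↦ ‖f x‖ ^ 2) a b := by
    simpa only [sq] using hnorm.fun_mul hnorm
  rw [← hsq.integral_deriv_eq_sub]
  refine intervalIntegral.integral_congr_ae ?_
  filter_upwards [hf'] with x hx hxab
  exact (hx (uIoc_subset_uIcc hxab)).norm_sq.deriv.symm

lemma norm_sq_sub_norm_sq_le (hf : AbsolutelyContinuousOnInterval f a b)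
    (hf' : ∀ᵐ x, x ∈ uIcc a b → HasDerivAt f (f' x) x)
    (hff' : IntervalIntegrable (fun x ↦ ‖f x‖ * ‖f' x‖) volume a b) :
    ‖f b‖ ^ 2 - ‖f a‖ ^ 2 ≤ 2 * |∫ x in a..b, ‖f x‖ * ‖f' x‖| := by
  calc ‖f b‖ ^ 2 - ‖f a‖ ^ 2 = ∫ x in a..b, 2 * inner ℝ (f x) (f' x) :=
        (integral_two_mul_inner_eq_norm_sq_sub hf hf').symm
    _ ≤ 2 * |∫ x in a..b, inner ℝ (f x) (f' x)| := by
        rw [intervalIntegral.integral_const_mul]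
        gcongr
        exact le_abs_self _
    _ ≤ 2 * |∫ x in a..b, ‖f x‖ * ‖f' x‖| := by
        refine mul_le_mul_of_nonneg_left ?_ zero_le_two
        exact intervalIntegral.norm_integral_le_abs_of_norm_le
          (.of_forall fun x ↦ norm_inner_le_norm (𝕜 := ℝ) (f x) (f' x)) hff'

lemma sub_mul_norm_sq_le_integral (hab : a ≤ b) (hf : AbsolutelyContinuousOnInterval f a b)
    (hf' : ∀ᵐ x, x ∈ uIcc a b → HasDerivAt f (f' x) x)
    (hff' : IntervalIntegrable (fun x ↦ ‖f x‖ * ‖f' x‖) volume a b) {x : ℝ} (hx : x ∈ Icc a b) :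
    (b - a) * ‖f x‖ ^ 2 ≤
      (∫ y in a..b, ‖f y‖ ^ 2) + (b - a) * (2 * ∫ y in a..b, ‖f y‖ * ‖f' y‖) := by
  rw [← uIcc_of_le hab] at hx
  have hpoint : ∀ y ∈ Icc a b, ‖f x‖ ^ 2 - 2 * ∫ s in a..b, ‖f s‖ * ‖f' s‖ ≤ ‖f y‖ ^ 2 := by
    intro y hy
    rw [← uIcc_of_le hab] at hy
    have hsub : uIcc y x ⊆ uIcc a b := uIcc_subset_uIcc hy hx
    have hyx := norm_sq_sub_norm_sq_le (hf.mono hsub)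
      (hf'.mono fun z hz hzyx ↦ hz (hsub hzyx)) (hff'.mono_set hsub)
    have hmono := intervalIntegral.abs_integral_mono_interval
      (uIoc_subset_uIoc_of_uIcc_subset_uIcc hsub) (.of_forall fun s ↦ by positivity) hff'
    rw [abs_of_nonneg (intervalIntegral.integral_nonneg hab fun s _ ↦ by positivity)] at hmono
    linarith
  have hcont : ContinuousOn (fun y ↦ ‖f y‖ ^ 2) (uIcc a b) := hf.continuousOn.norm.pow 2
  have haverage := intervalIntegral.integral_mono_on hab
    (intervalIntegrable_const (μ := volume))
    hcont.intervalIntegrable hpoint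
  rw [intervalIntegral.integral_const, smul_eq_mul] at haverage
  linarith

end AbsoluteContinuity

lemma intervalIntegrable_of_locallyIntegrable {E : Type*} [NormedAddCommGroup E] {f : ℝ → E}
    {μ : Measure ℝ} (hf : LocallyIntegrable f μ) (a b : ℝ) : IntervalIntegrable f μ a b :=
  (hf.integrableOn_isCompact isCompact_uIcc).intervalIntegrable

section UnitIntervals

variable {w g h : ℝ → ℝ} {B : ℝ}

lemma intervalIntegral_mul_le_mul_intervalIntegral {a b : ℝ} (hab : a ≤ b)
    (hw : IntervalIntegrable w volume a b) (hw0 : ∀ x, 0 ≤ w x)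
    (hB : ∫ x in a..b, w x ≤ B) (hg : Continuous g) (hg0 : ∀ x, 0 ≤ g x)
    (hgh : ∀ x ∈ Icc a b, g x ≤ ∫ y in a..b, h y) :
    ∫ x in a..b, w x * g x ≤ B * ∫ x in a..b, h x := by
  calc ∫ x in a..b, w x * g x ≤ ∫ x in a..b, w x * ∫ y in a..b, h y := by
        refine intervalIntegral.integral_mono_on hab (hw.mul_continuousOn hg.continuousOn)
          (hw.mul_const _) fun x hx ↦ ?_
        exact mul_le_mul_of_nonneg_left (hgh x hx) (hw0 x)
    _ = (∫ x in a..b, w x) * ∫ x in a..b, h x := intervalIntegral.integral_mul_const _ _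
    _ ≤ B * ∫ x in a..b, h x :=
        mul_le_mul_of_nonneg_right hB ((hg0 a).trans (hgh a (left_mem_Icc.2 hab)))

variable (hw : LocallyIntegrable w) (hw0 : ∀ x, 0 ≤ w x)
  (hB : ∀ n : ℤ, ∫ x in (n : ℝ)..n + 1, w x ≤ B) (hg : Continuous g) (hg0 : ∀ x, 0 ≤ g x)
  (hh : Integrable h) (hgh : ∀ n : ℤ, ∀ x ∈ Icc (n : ℝ) (n + 1), g x ≤ ∫ y in (n : ℝ)..n + 1, h y)

include hw hw0 hB hg hg0 hh hgh

lemma integrable_mul_of_le_unit_intervalIntegral : Integrable fun x ↦ w x * g x := by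
  have hloc (n : ℤ) : IntervalIntegrable w volume n (n + 1) :=
    intervalIntegrable_of_locallyIntegrable hw _ _
  rw [← integrableOn_univ, ← iUnion_Ioc_intCast ℝ]
  refine integrableOn_iUnion_of_summable_integral_norm
    (fun n ↦ ((hloc n).mul_continuousOn hg.continuousOn).1) ?_
  refine .of_nonneg_of_le (fun n ↦ integral_nonneg fun x ↦ norm_nonneg _) (fun n ↦ ?_)
    (((hh.hasSum_intervalIntegral 0).mul_left B).summable)
  have hnorm (x : ℝ) : ‖w x * g x‖ = w x * g x :=
    Real.norm_of_nonneg (mul_nonneg (hw0 x) (hg0 x))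
  simp only [hnorm, zero_add]
  rw [← intervalIntegral.integral_of_le (by linarith)]
  exact intervalIntegral_mul_le_mul_intervalIntegral (by linarith) (hloc n) hw0 (hB n) hg hg0
    (hgh n)

lemma integral_mul_le_of_le_unit_intervalIntegral :
    ∫ x, w x * g x ≤ B * ∫ x, h x := by
  have hwg := integrable_mul_of_le_unit_intervalIntegral hw hw0 hB hg hg0 hh hgh
  refine hasSum_le (fun n : ℤ ↦ ?_) (hwg.hasSum_intervalIntegral 0)
    ((hh.hasSum_intervalIntegral 0).mul_left B)
  simp only [zero_add]
  exact intervalIntegral_mul_le_mul_intervalIntegral (by linarith)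
    (intervalIntegrable_of_locallyIntegrable hw _ _) hw0 (hB n) hg hg0 (hgh n)

end UnitIntervals

/-- The norm of `L²(ℝ)`, as a real number; it is `0` by convention when `f` is not square
integrable. -/
noncomputable def l2Norm {E : Type*} [NormedAddCommGroup E] (f : ℝ → E) : ℝ :=
  √(∫ x, ‖f x‖ ^ 2)

section L2Norm

variable {E : Type*} [NormedAddCommGroup E]

lemma l2Norm_nonneg (f : ℝ → E) : 0 ≤ l2Norm f := Real.sqrt_nonneg _

lemma l2Norm_sq (f : ℝ → E) : l2Norm f ^ 2 = ∫ x, ‖f x‖ ^ 2 :=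
  Real.sq_sqrt (integral_nonneg fun x ↦ by positivity)

lemma integral_norm_mul_norm_le_l2Norm_mul_l2Norm {f g : ℝ → E} (hf : MemLp f 2)
    (hg : MemLp g 2) : ∫ x, ‖f x‖ * ‖g x‖ ≤ l2Norm f * l2Norm g := by
  simpa [l2Norm, Real.sqrt_eq_rpow] using integral_mul_norm_le_Lp_mul_Lq
    Real.HolderConjugate.two_two (by simpa using hf) (by simpa using hg)

end L2Norm

namespace InH1

variable {u u' : ℝ → ℂ} (hu : InH1 u u')

include hu

lemma absolutelyContinuousOnInterval (a b : ℝ) : AbsolutelyContinuousOnInterval u a b := by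
  obtain ⟨hu'loc, hprim, -, -⟩ := hu
  have hint := intervalIntegrable_of_locallyIntegrable hu'loc
  refine absolutelyContinuousOnInterval_of_dist_le
    (absolutelyContinuousOnInterval_primitive (hint a b) left_mem_uIcc) fun x _ y _ ↦ ?_
  rw [hprim x, hprim y, dist_add_left, dist_eq_norm, dist_eq_norm,
    intervalIntegral.integral_interval_sub_left (hint 0 x) (hint 0 y),
    intervalIntegral.integral_interval_sub_left (hint a x) (hint a y)]

lemma ae_hasDerivAt : ∀ᵐ x, HasDerivAt u (u' x) x := by
  obtain ⟨hu'loc, hprim, -, -⟩ := hu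
  filter_upwards [_root_.LocallyIntegrable.ae_hasDerivAt_integral hu'loc] with x hx
  rw [funext hprim]
  exact (hx 0).const_add (u 0)

protected lemma continuous : Continuous u :=
  continuous_iff_continuousAt.2 fun x ↦
    (hu.absolutelyContinuousOnInterval (x - 1) (x + 1)).continuousOn.continuousAt <| by
      rw [uIcc_of_le (by linarith)]
      exact Icc_mem_nhds (by linarith) (by linarith)

lemma memLp : MemLp u 2 := hu.2.2.1

lemma memLp_deriv : MemLp u' 2 := hu.2.2.2

lemma integrable_norm_sq : Integrable fun x ↦ ‖u x‖ ^ 2 :=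
  hu.memLp.integrable_norm_pow two_ne_zero

lemma integrable_norm_mul_norm_deriv : Integrable fun x ↦ ‖u x‖ * ‖u' x‖ :=
  hu.memLp.norm.integrable_mul hu.memLp_deriv.norm

lemma norm_sq_le_integral_unit_interval {t x : ℝ} (hx : x ∈ Icc t (t + 1)) :
    ‖u x‖ ^ 2 ≤ ∫ y in t..t + 1, (‖u y‖ ^ 2 + 2 * (‖u y‖ * ‖u' y‖)) := by
  have hcross := hu.integrable_norm_mul_norm_deriv
  have h := sub_mul_norm_sq_le_integral (by linarith) (hu.absolutelyContinuousOnInterval t (t + 1))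
    (hu.ae_hasDerivAt.mono fun y hy _ ↦ hy) hcross.intervalIntegrable hx
  rw [intervalIntegral.integral_add hu.integrable_norm_sq.intervalIntegrable
    (hcross.const_mul 2).intervalIntegrable, intervalIntegral.integral_const_mul]
  simpa only [add_sub_cancel_left, one_mul] using h

lemma integral_norm_sq_add_le :
    ∫ x, (‖u x‖ ^ 2 + 2 * (‖u x‖ * ‖u' x‖)) ≤ l2Norm u ^ 2 + 2 * (l2Norm u * l2Norm u') := by
  rw [integral_add hu.integrable_norm_sq (hu.integrable_norm_mul_norm_deriv.const_mul 2),
    integral_const_mul, l2Norm_sq]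
  gcongr
  exact integral_norm_mul_norm_le_l2Norm_mul_l2Norm hu.memLp hu.memLp_deriv

variable {w : ℝ → ℝ} {B : ℝ} (hw : LocallyIntegrable w) (hw0 : ∀ x, 0 ≤ w x)
  (hB : ∀ t, ∫ x in t..t + 1, w x ≤ B)

include hw hw0 hB

lemma integrable_mul_norm_sq : Integrable fun x ↦ w x * ‖u x‖ ^ 2 :=
  integrable_mul_of_le_unit_intervalIntegral hw hw0 (fun n ↦ hB n) (hu.continuous.norm.pow 2)
    (fun x ↦ by positivity)
    (hu.integrable_norm_sq.add (hu.integrable_norm_mul_norm_deriv.const_mul 2))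
    fun _ _ hx ↦ hu.norm_sq_le_integral_unit_interval hx

lemma integral_mul_norm_sq_le :
    ∫ x, w x * ‖u x‖ ^ 2 ≤ B * (l2Norm u ^ 2 + 2 * (l2Norm u * l2Norm u')) := by
  have hB0 : 0 ≤ B :=
    (intervalIntegral.integral_nonneg (by linarith) fun x _ ↦ hw0 x).trans (hB 0)
  refine (integral_mul_le_of_le_unit_intervalIntegral hw hw0 (fun n ↦ hB n)
    (hu.continuous.norm.pow 2) (fun x ↦ sq_nonneg _)
    (hu.integrable_norm_sq.add (hu.integrable_norm_mul_norm_deriv.const_mul 2))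
    fun _ _ hx ↦ hu.norm_sq_le_integral_unit_interval hx).trans ?_
  exact mul_le_mul_of_nonneg_left hu.integral_norm_sq_add_le hB0

end InH1

lemma stepL2_nonneg (Q : ℝ → ℂ) : 0 ≤ stepL2 Q := Real.sqrt_nonneg _

lemma stepL1_nonneg (τ : ℝ → ℂ) : 0 ≤ stepL1 τ :=
  Real.iSup_nonneg fun _ ↦ intervalIntegral.integral_nonneg (by linarith) fun _ _ ↦ norm_nonneg _

lemma Kc_nonneg (Q τ : ℝ → ℂ) : 0 ≤ Kc Q τ :=
  mul_nonneg zero_le_two (add_nonneg (stepL2_nonneg Q) (stepL1_nonneg τ))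

lemma InStepL2.integral_norm_sq_le {Q : ℝ → ℂ} (hQ : InStepL2 Q) (t : ℝ) :
    ∫ s in t..t + 1, ‖Q s‖ ^ 2 ≤ stepL2 Q ^ 2 := by
  rw [stepL2, Real.sq_sqrt (Real.iSup_nonneg fun _ ↦
    intervalIntegral.integral_nonneg (by linarith) fun _ _ ↦ by positivity)]
  exact le_ciSup hQ.2.2 t

lemma InStepL1.integral_norm_le {τ : ℝ → ℂ} (hτ : InStepL1 τ) (t : ℝ) :
    ∫ s in t..t + 1, ‖τ s‖ ≤ stepL1 τ :=
  le_ciSup hτ.2 t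

section FormBound

variable {Q τ u u' : ℝ → ℂ}

lemma InStepL2.memLp_mul (hQ : InStepL2 Q) (hu : InH1 u u') : MemLp (fun x ↦ Q x * u x) 2 := by
  refine (memLp_two_iff_integrable_sq_norm (hQ.1.mul hu.memLp.1)).2 ?_
  simpa only [Pi.mul_apply, norm_mul, mul_pow] using
    hu.integrable_mul_norm_sq hQ.2.1 (fun x ↦ by positivity) hQ.integral_norm_sq_le

lemma InStepL2.l2Norm_mul_le (hQ : InStepL2 Q) (hu : InH1 u u') :
    l2Norm (fun x ↦ Q x * u x) ≤
      stepL2 Q * √(l2Norm u ^ 2 + 2 * (l2Norm u * l2Norm u')) := by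
  rw [← Real.sqrt_sq (stepL2_nonneg Q), ← Real.sqrt_mul (sq_nonneg _), l2Norm]
  simp only [norm_mul, mul_pow]
  exact Real.sqrt_le_sqrt <|
    hu.integral_mul_norm_sq_le hQ.2.1 (fun x ↦ by positivity) hQ.integral_norm_sq_le

lemma InStepL1.norm_integral_mul_norm_sq_le (hτ : InStepL1 τ) (hu : InH1 u u') :
    ‖∫ x, τ x * (‖u x‖ : ℂ) ^ 2‖ ≤
      stepL1 τ * (l2Norm u ^ 2 + 2 * (l2Norm u * l2Norm u')) := by
  have hnorm (x : ℝ) : ‖τ x * (‖u x‖ : ℂ) ^ 2‖ = ‖τ x‖ * ‖u x‖ ^ 2 := by simp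
  refine (norm_integral_le_integral_norm _).trans ?_
  simp only [hnorm]
  exact hu.integral_mul_norm_sq_le (fun x ↦ (hτ.1 x).norm) (fun x ↦ norm_nonneg _)
    hτ.integral_norm_le

lemma norm_mul_conj_mul_add_conj_mul_le (q z z' : ℂ) :
    ‖q * ((starRingEnd ℂ) z' * z + (starRingEnd ℂ) z * z')‖ ≤ 2 * (‖q * z‖ * ‖z'‖) := by
  calc ‖q * ((starRingEnd ℂ) z' * z + (starRingEnd ℂ) z * z')‖
      ≤ ‖q‖ * (‖(starRingEnd ℂ) z' * z‖ + ‖(starRingEnd ℂ) z * z'‖) := by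
        rw [norm_mul]
        gcongr
        exact norm_add_le _ _
    _ = 2 * (‖q * z‖ * ‖z'‖) := by
        simp only [norm_mul, RCLike.norm_conj]
        ring

lemma norm_integral_mul_conj_mul_add_conj_mul_le (hQu : MemLp (fun x ↦ Q x * u x) 2)
    (hu' : MemLp u' 2) :
    ‖∫ x, Q x * ((starRingEnd ℂ) (u' x) * u x + (starRingEnd ℂ) (u x) * u' x)‖ ≤
      2 * (l2Norm (fun x ↦ Q x * u x) * l2Norm u') := by
  calc _ ≤ ∫ x, 2 * (‖Q x * u x‖ * ‖u' x‖) :=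
        norm_integral_le_of_norm_le ((hQu.norm.integrable_mul hu'.norm).const_mul 2)
          (.of_forall fun x ↦ norm_mul_conj_mul_add_conj_mul_le (Q x) (u x) (u' x))
    _ ≤ _ := by
        rw [integral_const_mul]
        gcongr
        exact integral_norm_mul_norm_le_l2Norm_mul_l2Norm hQu hu'

lemma norm_tform_sub_le (hQ : InStepL2 Q) (hτ : InStepL1 τ) (hu : InH1 u u') :
    ‖tform Q τ u u' - (l2Norm u' ^ 2 : ℝ)‖ ≤
      2 * (stepL2 Q * √(l2Norm u ^ 2 + 2 * (l2Norm u * l2Norm u')) * l2Norm u') +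
        stepL1 τ * (l2Norm u ^ 2 + 2 * (l2Norm u * l2Norm u')) := by
  have hcancel (a b c : ℂ) : a - b + c - a = c - b := by ring
  rw [tform, l2Norm_sq u', hcancel]
  calc _ ≤ _ := norm_sub_le _ _
    _ ≤ stepL1 τ * (l2Norm u ^ 2 + 2 * (l2Norm u * l2Norm u')) +
        2 * (l2Norm (fun x ↦ Q x * u x) * l2Norm u') :=
      add_le_add (hτ.norm_integral_mul_norm_sq_le hu)
        (norm_integral_mul_conj_mul_add_conj_mul_le (hQ.memLp_mul hu) hu.memLp_deriv)
    _ ≤ _ := by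
      rw [add_comm]
      gcongr
      · exact l2Norm_nonneg u'
      · exact hQ.l2Norm_mul_le hu

lemma norm_tform_sub_le_of_l2Norm_eq_one (hQ : InStepL2 Q) (hτ : InStepL1 τ) (hu : InH1 u u')
    (hnorm : l2Norm u = 1) :
    ‖tform Q τ u u' - (l2Norm u' ^ 2 : ℝ)‖ ≤ Kc Q τ * (√(1 + 2 * l2Norm u') ^ 3 / 2) := by
  have hv := l2Norm_nonneg u'
  have hbound := norm_tform_sub_le hQ hτ hu
  simp only [hnorm, one_pow, one_mul] at hbound
  set v := l2Norm u'
  set s := √(1 + 2 * v)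
  have hs_sq : s ^ 2 = 1 + 2 * v := Real.sq_sqrt (by positivity)
  have hs_one : 1 ≤ s := Real.one_le_sqrt.2 (by linarith)
  have hQs : stepL2 Q * s * (2 * v) ≤ stepL2 Q * s * s ^ 2 :=
    mul_le_mul_of_nonneg_left (by linarith) (mul_nonneg (stepL2_nonneg Q) (by linarith))
  have hτs : stepL1 τ * s ^ 2 ≤ stepL1 τ * s ^ 3 :=
    mul_le_mul_of_nonneg_left (pow_le_pow_right₀ hs_one (by norm_num)) (stepL1_nonneg τ)
  rw [← hs_sq] at hbound
  rw [Kc]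
  linarith

end FormBound

section Region

variable {K ρ x M : ℝ} {z : ℂ}

lemma two_mul_abs_re_sub_le (hρ : 0 ≤ ρ) (hz : ‖z - (x : ℂ)‖ ≤ K * ρ)
    (hM : (2 * K + 1) * ρ ≤ x + M) : 2 * |z.re - x| ≤ x + M := by
  have hre : |z.re - x| ≤ K * ρ := by
    simpa only [Complex.sub_re, Complex.ofReal_re] using (Complex.abs_re_le_norm _).trans hz
  linarith

lemma neg_le_re_of_norm_sub_le (hρ : 0 ≤ ρ) (hz : ‖z - (x : ℂ)‖ ≤ K * ρ)
    (hM : (2 * K + 1) * ρ ≤ x + M) : -M ≤ z.re := by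
  have hre := two_mul_abs_re_sub_le hρ hz hM
  linarith [neg_abs_le (z.re - x), abs_nonneg (z.re - x)]

lemma le_two_mul_re_add_of_norm_sub_le (hρ : 0 ≤ ρ) (hz : ‖z - (x : ℂ)‖ ≤ K * ρ)
    (hM : (2 * K + 1) * ρ ≤ x + M) : x ≤ 2 * z.re + M := by
  linarith [two_mul_abs_re_sub_le hρ hz hM, neg_abs_le (z.re - x)]

lemma abs_im_le_of_norm_sub_ofReal_le {r : ℝ} (hz : ‖z - (x : ℂ)‖ ≤ r) : |z.im| ≤ r := by
  simpa only [Complex.sub_im, Complex.ofReal_im, sub_zero] using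
    (Complex.abs_im_le_norm _).trans hz

lemma abs_im_le_div_mul_re_add (hK : 0 ≤ K) (hρ : 0 ≤ ρ) (hz : ‖z - (x : ℂ)‖ ≤ K * ρ)
    (hM : (2 * K + 1) * ρ ≤ x + M) : |z.im| ≤ 2 * K / (2 * K + 1) * (z.re + M) := by
  have hre : (2 * K + 1) * ρ ≤ 2 * (z.re + M) := by
    linarith [le_two_mul_re_add_of_norm_sub_le hρ hz hM]
  calc |z.im| ≤ K * ρ := abs_im_le_of_norm_sub_ofReal_le hz
    _ = K / (2 * K + 1) * ((2 * K + 1) * ρ) := by field_simp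
    _ ≤ K / (2 * K + 1) * (2 * (z.re + M)) := by gcongr
    _ = 2 * K / (2 * K + 1) * (z.re + M) := by ring

end Region

lemma mul_cube_div_two_le {L s v : ℝ} (hL : 1 ≤ L) (hs : s ^ 2 = 1 + 2 * v) :
    L * (s ^ 3 / 2) ≤ v ^ 2 + 4 * L ^ 4 := by
  have hL4 : 1 ≤ L ^ 4 := one_le_pow₀ hL
  have hv : s ^ 4 - 2 ≤ 8 * v ^ 2 := by
    calc s ^ 4 - 2 = (1 + 2 * v) ^ 2 - 2 := by rw [← hs]; ring
      _ ≤ 8 * v ^ 2 := by linarith [sq_nonneg (1 - 2 * v)]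
  have hquartic : 0 ≤ s ^ 4 - 4 * L * s ^ 3 + 30 * L ^ 4 := by
    calc 0 ≤ (s ^ 2 - 2 * L * s - 3 * L ^ 2) ^ 2 + 2 * (L * (s - 3 * L)) ^ 2 + 3 * L ^ 4 := by
          positivity
      _ = s ^ 4 - 4 * L * s ^ 3 + 30 * L ^ 4 := by ring
  linarith

lemma pow_four_rpow_three_quarters {s : ℝ} (hs : 0 ≤ s) : (s ^ 4) ^ ((3 : ℝ) / 4) = s ^ 3 := by
  rw [← Real.rpow_natCast_mul hs, ← Real.rpow_natCast]
  norm_num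

lemma cube_le_mul_rpow_of_pow_four_le {s r : ℝ} (hs : 0 ≤ s) (hsr : s ^ 4 ≤ 4 ^ 4 / 12 * r) :
    s ^ 3 ≤ 64 / (12 : ℝ) ^ ((3 : ℝ) / 4) * r ^ ((3 : ℝ) / 4) := by
  have hr : 0 ≤ r := by linarith [pow_nonneg hs 4]
  calc s ^ 3 = (s ^ 4) ^ ((3 : ℝ) / 4) := (pow_four_rpow_three_quarters hs).symm
    _ ≤ (4 ^ 4 / 12 * r) ^ ((3 : ℝ) / 4) := by gcongr
    _ = 64 / (12 : ℝ) ^ ((3 : ℝ) / 4) * r ^ ((3 : ℝ) / 4) := by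
      rw [Real.mul_rpow (by norm_num) hr, Real.div_rpow (by norm_num) (by norm_num),
        pow_four_rpow_three_quarters (by norm_num)]
      norm_num

lemma cube_div_two_le_mul_rpow {s v r : ℝ} (hs : 0 ≤ s) (hsv : s ^ 2 = 1 + 2 * v) (hr : 1 ≤ r)
    (hv : v ^ 2 ≤ 7 / 3 * r) :
    s ^ 3 / 2 ≤ 32 / (12 : ℝ) ^ ((3 : ℝ) / 4) * r ^ ((3 : ℝ) / 4) := by
  have hs4 : s ^ 4 ≤ 4 ^ 4 / 12 * r := by
    calc s ^ 4 = (1 + 2 * v) ^ 2 := by rw [← hsv]; ring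
      _ ≤ 2 + 8 * v ^ 2 := by linarith [sq_nonneg (1 - 2 * v)]
      _ ≤ 4 ^ 4 / 12 * r := by linarith
  calc s ^ 3 / 2 ≤ 64 / (12 : ℝ) ^ ((3 : ℝ) / 4) * r ^ ((3 : ℝ) / 4) / 2 := by
        gcongr
        exact cube_le_mul_rpow_of_pow_four_le hs hs4
    _ = 32 / (12 : ℝ) ^ ((3 : ℝ) / 4) * r ^ ((3 : ℝ) / 4) := by ring

/-- Localization of the numerical range of the Schrödinger form: for a unit vector
`u ∈ H¹(ℝ)` the value `λ = t[u]` lies in the set `M_K` (with `λ₀ = -4(2K+1)⁴` and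
`λ₁ = 12(2K+1)⁴`): either `λ₀ ≤ Re λ ≤ λ₁` and
`|Im λ| ≤ (2K/(2K+1)) Re λ + 8K(2K+1)³`, or `Re λ > λ₁` and
`|Im λ| ≤ (32/12^{3/4}) K (Re λ)^{3/4}`. -/
theorem numerical_range_schrodinger (Q τ u u' : ℝ → ℂ)
    (hQ : InStepL2 Q) (hτ : InStepL1 τ) (hu : InH1 u u')
    (hnorm : (∫ x : ℝ, ‖u x‖ ^ 2) = 1) :
    ((-4 * (2 * Kc Q τ + 1) ^ 4 ≤ (tform Q τ u u').re ∧
        (tform Q τ u u').re ≤ 12 * (2 * Kc Q τ + 1) ^ 4 ∧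
        |(tform Q τ u u').im| ≤
          2 * Kc Q τ / (2 * Kc Q τ + 1) * (tform Q τ u u').re
            + 8 * Kc Q τ * (2 * Kc Q τ + 1) ^ 3) ∨
      (12 * (2 * Kc Q τ + 1) ^ 4 < (tform Q τ u u').re ∧
        |(tform Q τ u u').im| ≤
          32 / (12 : ℝ) ^ ((3 : ℝ) / 4) * Kc Q τ * (tform Q τ u u').re ^ ((3 : ℝ) / 4))) := by
  have hK := Kc_nonneg Q τ
  have hL : 1 ≤ 2 * Kc Q τ + 1 := by linarith
  have hs_sq : √(1 + 2 * l2Norm u') ^ 2 = 1 + 2 * l2Norm u' :=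
    Real.sq_sqrt (by linarith [l2Norm_nonneg u'])
  have hρ : 0 ≤ √(1 + 2 * l2Norm u') ^ 3 / 2 := by positivity
  have hz := norm_tform_sub_le_of_l2Norm_eq_one hQ hτ hu (by rw [l2Norm, hnorm, Real.sqrt_one])
  have hM := mul_cube_div_two_le hL hs_sq
  obtain hle | hgt := le_or_gt (tform Q τ u u').re (12 * (2 * Kc Q τ + 1) ^ 4)
  · refine .inl ⟨by linarith [neg_le_re_of_norm_sub_le hρ hz hM], hle, ?_⟩
    refine (abs_im_le_div_mul_re_add hK hρ hz hM).trans_eq ?_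
    field_simp
    ring
  · refine .inr ⟨hgt, ?_⟩
    have hv := le_two_mul_re_add_of_norm_sub_le hρ hz hM
    have hr : 1 ≤ (tform Q τ u u').re := by linarith [one_le_pow₀ (n := 4) hL]
    calc |(tform Q τ u u').im| ≤ Kc Q τ * (√(1 + 2 * l2Norm u') ^ 3 / 2) :=
          abs_im_le_of_norm_sub_ofReal_le hz
      _ ≤ _ := mul_le_mul_of_nonneg_left
        (cube_div_two_le_mul_rpow (Real.sqrt_nonneg _) hs_sq hr (by linarith)) hK
      _ = _ := by ring
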